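/- Let P ≥ 1 be an integer, D = P² + 4, λ₁ = (P + √D)/2, λ₂ = (P − √D)/2, and define g(t) = (λ₁ : ℂ)^t + (λ₂ : ℂ)^t and h(t) = ((λ₁ : ℂ)^t − (λ₂ : ℂ)^t)/√D using principal complex powers. Set ψ₁(t) = g(t)² − g(t−1)·g(t+1) and ψ₂(t) = h(t−1)·h(t+1) − h(t)². Then for every real t, ψ₁(t) = (P² + 4) · ψ₂(t). -/

import Mathlib

/-- `ψ₁(t) = (P² + 4)·ψ₂(t)`: the P-Lucas helix is `P² + 4` times the P-Fibonacci helix. -/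
theorem psi1_eq_D_mul_psi2 (P : ℤ) (hP : 1 ≤ P) (D : ℝ) (hD : D = (P : ℝ) ^ 2 + 4)
    (lam1 lam2 : ℝ) (hlam1 : lam1 = ((P : ℝ) + Real.sqrt D) / 2)
    (hlam2 : lam2 = ((P : ℝ) - Real.sqrt D) / 2)
    (g h : ℝ → ℂ)
    (hg : ∀ t : ℝ, g t = (lam1 : ℂ) ^ (t : ℂ) + (lam2 : ℂ) ^ (t : ℂ))
    (hh : ∀ t : ℝ, h t = ((lam1 : ℂ) ^ (t : ℂ) - (lam2 : ℂ) ^ (t : ℂ)) / (Real.sqrt D : ℂ))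
    (psi1 psi2 : ℝ → ℂ)
    (hpsi1 : ∀ t : ℝ, psi1 t = g t ^ 2 - g (t - 1) * g (t + 1))
    (hpsi2 : ∀ t : ℝ, psi2 t = h (t - 1) * h (t + 1) - h t ^ 2) :
    ∀ t : ℝ, psi1 t = ((P : ℂ) ^ 2 + 4) * psi2 t := by
  intro t
  have hDpos : 0 < D := by rw [hD]; positivity
  have hsq : Real.sqrt D ^ 2 = (P : ℝ) ^ 2 + 4 := by rw [Real.sq_sqrt hDpos.le, hD]
  have hsqC : (Real.sqrt D : ℂ) ^ 2 = (P : ℂ) ^ 2 + 4 := by exact_mod_cast hsq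
  have hsqrt : (Real.sqrt D : ℂ) ≠ 0 := by
    exact_mod_cast (Real.sqrt_pos.mpr hDpos).ne'
  have hprod : lam1 * lam2 = -1 := by
    rw [hlam1, hlam2]
    linear_combination -hsq / 4
  have h1 : (lam1 : ℂ) ≠ 0 := by
    have : lam1 ≠ 0 := by rintro rfl; norm_num at hprod
    exact_mod_cast this
  have h2 : (lam2 : ℂ) ≠ 0 := by
    have : lam2 ≠ 0 := by rintro rfl; norm_num at hprod
    exact_mod_cast this
  rw [hpsi1, hpsi2, ← hsqC]
  simp only [hg, hh, Complex.ofReal_sub, Complex.ofReal_add, Complex.ofReal_one,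
    Complex.cpow_sub _ _ h1, Complex.cpow_sub _ _ h2, Complex.cpow_add _ _ h1,
    Complex.cpow_add _ _ h2, Complex.cpow_one]
  field_simp
  ring
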